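/- arXiv:1904.07713 — 4 statements merged into one kernel-verified Lean document; each statement's English description precedes it below -/
import Mathlib

section
/- Let n ≥ 1 and let w : ℝⁿ → ℝ be a smooth strictly convex function (D²w(x) positive definite for all x) satisfying the semilinear equation √2 · Δw(x) = (1/2)⟨x, Dw(x)⟩ − w(x) for all x ∈ ℝⁿ. Then w is a quadratic polynomial. -/
open Real Filter Matrix
open scoped RealInnerProductSpace

noncomputable section

/-- The Hessian matrix of `u` at `x`, with entries the second iterated derivatives
in the coordinate directions. -/
def Hess (n : ℕ) (u : EuclideanSpace ℝ (Fin n) → ℝ) (x : EuclideanSpace ℝ (Fin n)) :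
    Matrix (Fin n) (Fin n) ℝ :=
  Matrix.of fun i j =>
    iteratedFDeriv ℝ 2 u x ![EuclideanSpace.single i 1, EuclideanSpace.single j 1]

open Classical in
/-- The eigenvalues of a real symmetric matrix (junk value `0` if not symmetric). -/
def eigs {n : ℕ} (A : Matrix (Fin n) (Fin n) ℝ) : Fin n → ℝ :=
  if h : A.IsHermitian then h.eigenvalues else 0

/-- `u` is a quadratic polynomial:
`u x = (1/2)⟨x, A x⟩ + ⟨β, x⟩ + c` with `A` symmetric. -/
def IsQuadPoly (n : ℕ) (u : EuclideanSpace ℝ (Fin n) → ℝ) : Prop :=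
  ∃ (A : Matrix (Fin n) (Fin n) ℝ) (β : EuclideanSpace ℝ (Fin n)) (c : ℝ), A.IsSymm ∧
    ∀ x, u x = (1/2) * (∑ i, ∑ j, A i j * x i * x j) + ⟪β, x⟫ + c

/-!
Write the equation as `a Δw = ⟨x, ∇w⟩ / 2 - w` and set `b = 1 / (2a)`. It says that `w` is an
eigenfunction, with eigenvalue `-2b`, of the Ornstein–Uhlenbeck operator `L = Δ - b⟨x, ∇ ·⟩`. Since
`[L, ∂ₑ] = b ∂ₑ`, each derivative raises the eigenvalue by `b`, so the second derivatives `∂ₑ∂ₑw`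
are `L`-harmonic; convexity bounds them below. The Gaussian measure `exp (-b‖x‖² / 2) dx`, which
makes `L` symmetric, is finite, so the Caccioppoli inequality with cutoffs of large radius shows
that a supersolution of `L` bounded below is constant. Hence `D²w` is constant.
-/

section Calculus

variable {E F : Type*} [NormedAddCommGroup E] [NormedSpace ℝ E]
  [NormedAddCommGroup F] [NormedSpace ℝ F] {f : E → F}

lemma contDiff_fderiv_apply {m n : WithTop ℕ∞} (hf : ContDiff ℝ n f) (hmn : m + 1 ≤ n) (e : E) :
    ContDiff ℝ m (fun y ↦ fderiv ℝ f y e) :=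
  (hf.fderiv_right hmn).clm_apply contDiff_const

lemma differentiable_fderiv (hf : ContDiff ℝ 2 f) : Differentiable ℝ (fderiv ℝ f) :=
  (hf.fderiv_right (m := 1) le_rfl).differentiable one_ne_zero

lemma fderiv_fderiv_apply {x : E} (hf : DifferentiableAt ℝ (fderiv ℝ f) x) (u v : E) :
    fderiv ℝ (fun y ↦ fderiv ℝ f y v) x u = fderiv ℝ (fderiv ℝ f) x u v := by
  rw [fderiv_clm_apply hf (differentiableAt_const v)]
  simp

lemma isSymmSndFDerivAt_of_contDiff (hf : ContDiff ℝ 2 f) (x : E) : IsSymmSndFDerivAt ℝ f x :=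
  hf.contDiffAt.isSymmSndFDerivAt (by simp)

lemma fderiv_fderiv_apply_comm (hf : ContDiff ℝ 2 f) (u v : E) :
    (fun x ↦ fderiv ℝ (fun y ↦ fderiv ℝ f y v) x u) =
      fun x ↦ fderiv ℝ (fun y ↦ fderiv ℝ f y u) x v := by
  funext x
  have hf' := differentiable_fderiv hf x
  rw [fderiv_fderiv_apply hf', fderiv_fderiv_apply hf', isSymmSndFDerivAt_of_contDiff hf x]

lemma fderiv_fderiv_apply_self (hf : ContDiff ℝ 2 f) (x e : E) :
    fderiv ℝ (fun y ↦ fderiv ℝ f y y) x e =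
      fderiv ℝ (fun y ↦ fderiv ℝ f y e) x x + fderiv ℝ f x e := by
  have hf' := differentiable_fderiv hf x
  rw [fderiv_clm_apply hf' differentiableAt_fun_id, fderiv_fderiv_apply hf',
    isSymmSndFDerivAt_of_contDiff hf x x e]
  simp [add_comm]

lemma eq_taylor_two_of_fderiv_fderiv_eq [CompleteSpace F] (hf : ContDiff ℝ 2 f) {x v : E}
    (h : ∀ y, fderiv ℝ (fderiv ℝ f) y v v = fderiv ℝ (fderiv ℝ f) x v v) :
    f (x + v) = f x + fderiv ℝ f x v + (1 / 2 : ℝ) • fderiv ℝ (fderiv ℝ f) x v v := by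
  have htaylor := map_add_eq_sum_add_integral_iteratedFDeriv (n := 1) (x := x) (y := v)
    fun t _ ↦ hf.contDiffAt (x := x + t • v)
  have hint : ∫ t : ℝ in 0..1, (1 - t) = 1 / 2 := by
    rw [intervalIntegral.integral_sub intervalIntegrable_const
      intervalIntegral.intervalIntegrable_id]
    norm_num
  simpa [Finset.sum_range_succ, iteratedFDeriv_two_apply, h,
    intervalIntegral.integral_smul_const, hint] using htaylor

end Calculus

section Laplacian

open InnerProductSpace Laplacian Gradient

variable {E F : Type*} [NormedAddCommGroup E] [InnerProductSpace ℝ E]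
  [NormedAddCommGroup F] [NormedSpace ℝ F] {f : E → F} {u : E → ℝ}

lemma continuous_gradient [CompleteSpace E] (hu : ContDiff ℝ 1 u) : Continuous (∇ u) :=
  (toDual ℝ E).symm.continuous.comp (hu.continuous_fderiv one_ne_zero)

lemma norm_gradient [CompleteSpace E] (u : E → ℝ) (x : E) : ‖∇ u x‖ = ‖fderiv ℝ u x‖ :=
  (toDual ℝ E).symm.norm_map _

lemma fderiv_gradient_self [CompleteSpace E] (u : E → ℝ) (x : E) :
    fderiv ℝ u x (∇ u x) = ‖fderiv ℝ u x‖ ^ 2 := by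
  rw [← inner_gradient_left, real_inner_self_eq_norm_sq, norm_gradient]

lemma continuous_fderiv_gradient [CompleteSpace E] {φ : E → ℝ} (hφ : ContDiff ℝ 1 φ)
    (hu : ContDiff ℝ 1 u) : Continuous (fun x ↦ fderiv ℝ φ x (∇ u x)) :=
  (hφ.continuous_fderiv one_ne_zero).clm_apply (continuous_gradient hu)

lemma hasCompactSupport_fderiv_gradient [CompleteSpace E] {φ : E → ℝ} (hc : HasCompactSupport φ)
    (u : E → ℝ) : HasCompactSupport (fun x ↦ fderiv ℝ φ x (∇ u x)) :=
  (hc.fderiv (𝕜 := ℝ)).mono fun x hx h ↦ hx (by simp [h])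

lemma fderiv_sq_div_apply {η : E → ℝ} {x : E} (hη : DifferentiableAt ℝ η x)
    (hu : DifferentiableAt ℝ u x) (hx : u x ≠ 0) (v : E) :
    fderiv ℝ (fun y ↦ η y ^ 2 / u y) x v =
      2 * (η x / u x) * fderiv ℝ η x v - (η x / u x) ^ 2 * fderiv ℝ u x v := by
  have h : HasFDerivAt (fun y ↦ η y ^ 2 * (u y)⁻¹) _ x :=
    (hη.hasFDerivAt.pow 2).fun_mul ((hasDerivAt_inv hx).comp_hasFDerivAt x hu.hasFDerivAt)
  simp_rw [div_eq_mul_inv, h.fderiv, _root_.add_apply, _root_.smul_apply, smul_eq_mul]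
  field_simp
  ring

lemma sq_le_sub_fderiv_sq_div_gradient [CompleteSpace E] {η : E → ℝ} {x : E}
    (hη : DifferentiableAt ℝ η x) (hu : DifferentiableAt ℝ u x) (hx : u x ≠ 0) :
    (η x * (‖fderiv ℝ u x‖ / u x)) ^ 2 ≤
      4 * ‖fderiv ℝ η x‖ ^ 2 - 2 * fderiv ℝ (fun y ↦ η y ^ 2 / u y) x (∇ u x) := by
  have hinner : η x / u x * fderiv ℝ η x (∇ u x) ≤
      |η x / u x| * (‖fderiv ℝ η x‖ * ‖fderiv ℝ u x‖) := by
    refine (le_abs_self _).trans ?_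
    rw [abs_mul, ← norm_gradient u]
    gcongr
    exact (fderiv ℝ η x).le_opNorm _
  have hsquare := sq_nonneg (2 * ‖fderiv ℝ η x‖ - |η x / u x| * ‖fderiv ℝ u x‖)
  rw [fderiv_sq_div_apply hη hu hx, fderiv_gradient_self]
  have hsq : |η x / u x| ^ 2 = (η x / u x) ^ 2 := sq_abs _
  linear_combination 4 * hinner + hsquare + ‖fderiv ℝ u x‖ ^ 2 * hsq

variable [FiniteDimensional ℝ E]

lemma laplacian_eq_sum_fderiv_fderiv {ι : Type*} [Fintype ι] (b : OrthonormalBasis ι ℝ E)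
    (hf : ContDiff ℝ 2 f) (x : E) :
    Δ f x = ∑ i, fderiv ℝ (fun y ↦ fderiv ℝ f y (b i)) x (b i) := by
  rw [laplacian_eq_iteratedFDeriv_orthonormalBasis f b]
  refine Finset.sum_congr rfl fun i _ ↦ ?_
  simp [iteratedFDeriv_two_apply, fderiv_fderiv_apply (differentiable_fderiv hf x)]

lemma contDiff_laplacian {m : WithTop ℕ∞} (hf : ContDiff ℝ (m + 2) f) :
    ContDiff ℝ m (Δ f) := by
  have hf' : ContDiff ℝ (m + 1 + 1) f := by rwa [add_assoc, one_add_one_eq_two]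
  rw [funext (laplacian_eq_sum_fderiv_fderiv (stdOrthonormalBasis ℝ E) (hf.of_le le_add_self))]
  exact ContDiff.sum fun i _ ↦
    contDiff_fderiv_apply (contDiff_fderiv_apply hf' le_rfl _) le_rfl _

lemma laplacian_fderiv_apply (hf : ContDiff ℝ 3 f) (x e : E) :
    Δ (fun y ↦ fderiv ℝ f y e) x = fderiv ℝ (Δ f) x e := by
  have hf2 : ContDiff ℝ 2 f := hf.of_le (by norm_num)
  have hD (v : E) : ContDiff ℝ 2 (fun y ↦ fderiv ℝ f y v) := contDiff_fderiv_apply hf le_rfl v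
  set b := stdOrthonormalBasis ℝ E
  have hDD (i) : DifferentiableAt ℝ (fun z ↦ fderiv ℝ (fun y ↦ fderiv ℝ f y (b i)) z (b i)) x :=
    (contDiff_fderiv_apply (hD (b i)) le_rfl (b i)).differentiable one_ne_zero x
  rw [funext (laplacian_eq_sum_fderiv_fderiv b hf2), laplacian_eq_sum_fderiv_fderiv b (hD e),
    fderiv_fun_sum fun i _ ↦ hDD i, _root_.sum_apply]
  refine Finset.sum_congr rfl fun i _ ↦ ?_
  rw [fderiv_fderiv_apply_comm hf2 (b i) e]
  exact congrFun (fderiv_fderiv_apply_comm (hD (b i)) (b i) e) x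

end Laplacian

section OrnsteinUhlenbeck

open Laplacian

variable {E F : Type*} [NormedAddCommGroup E] [InnerProductSpace ℝ E] [FiniteDimensional ℝ E]
  [NormedAddCommGroup F] [NormedSpace ℝ F] {f : E → F}

/-- The Ornstein–Uhlenbeck operator `Δ - b ⟨x, ∇ ·⟩`, with the drift term written as the derivative
at `x` in the direction `x`. -/
def ornsteinUhlenbeck (b : ℝ) (f : E → F) (x : E) : F :=
  Δ f x - b • fderiv ℝ f x x

lemma ornsteinUhlenbeck_add_const (b : ℝ) (hf : ContDiff ℝ 2 f) (c : F) (x : E) :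
    ornsteinUhlenbeck b (fun y ↦ f y + c) x = ornsteinUhlenbeck b f x := by
  have hΔ : Δ (fun y ↦ f y + c) x = Δ f x := by
    simpa [Pi.add_def] using hf.contDiffAt.laplacian_add (x := x) (contDiffAt_const (c := c))
  simp only [ornsteinUhlenbeck, hΔ, fderiv_add_const]

lemma ornsteinUhlenbeck_fderiv_apply (b : ℝ) (hf : ContDiff ℝ 3 f) (x e : E) :
    ornsteinUhlenbeck b (fun y ↦ fderiv ℝ f y e) x =
      fderiv ℝ (ornsteinUhlenbeck b f) x e + b • fderiv ℝ f x e := by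
  have hf2 : ContDiff ℝ 2 f := hf.of_le (by norm_num)
  have hΔ : DifferentiableAt ℝ (Δ f) x :=
    (contDiff_laplacian (m := 1) (by norm_num; exact hf)).differentiable one_ne_zero x
  have hdrift : DifferentiableAt ℝ (fun y ↦ fderiv ℝ f y y) x :=
    (differentiable_fderiv hf2 x).clm_apply differentiableAt_fun_id
  have hOU : fderiv ℝ (ornsteinUhlenbeck b f) x e =
      fderiv ℝ (Δ f) x e - b • fderiv ℝ (fun y ↦ fderiv ℝ f y y) x e := by
    unfold ornsteinUhlenbeck
    rw [fderiv_fun_sub hΔ (hdrift.fun_const_smul b), fderiv_fun_const_smul hdrift]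
    rfl
  rw [hOU, fderiv_fderiv_apply_self hf2, ← laplacian_fderiv_apply hf, ornsteinUhlenbeck, smul_add]
  abel

lemma ornsteinUhlenbeck_fderiv_apply_of_eigenfunction {b c : ℝ} (hf : ContDiff ℝ 3 f)
    (h : ∀ x, ornsteinUhlenbeck b f x = c • f x) (x e : E) :
    ornsteinUhlenbeck b (fun y ↦ fderiv ℝ f y e) x = (c + b) • fderiv ℝ f x e := by
  rw [ornsteinUhlenbeck_fderiv_apply b hf, funext h,
    fderiv_fun_const_smul (hf.differentiable (by norm_num) x), add_smul]
  rfl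

end OrnsteinUhlenbeck

section Gaussian

open Laplacian Gradient MeasureTheory

variable {E : Type*} [NormedAddCommGroup E]

/-- The Gaussian weight `exp (-b‖x‖² / 2)`, unnormalised, with respect to which the operator
`ornsteinUhlenbeck b` is symmetric. -/
def gaussianWeight (b : ℝ) (x : E) : ℝ :=
  Real.exp (-(b / 2) * ‖x‖ ^ 2)

lemma gaussianWeight_pos (b : ℝ) (x : E) : 0 < gaussianWeight b x :=
  Real.exp_pos _

variable [InnerProductSpace ℝ E]

lemma contDiff_gaussianWeight {n : WithTop ℕ∞} (b : ℝ) :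
    ContDiff ℝ n (gaussianWeight b : E → ℝ) :=
  (contDiff_const.mul (contDiff_norm_sq ℝ)).exp

lemma continuous_gaussianWeight (b : ℝ) : Continuous (gaussianWeight b : E → ℝ) :=
  (contDiff_gaussianWeight (n := 0) b).continuous

lemma fderiv_gaussianWeight_apply (b : ℝ) (x v : E) :
    fderiv ℝ (gaussianWeight b) x v = -(b * gaussianWeight b x * ⟪x, v⟫) := by
  have h : HasFDerivAt (gaussianWeight b) _ x :=
    ((hasStrictFDerivAt_norm_sq x).hasFDerivAt.const_mul (-(b / 2))).exp
  rw [h.fderiv]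
  simp only [_root_.smul_apply, innerSL_apply_apply, smul_eq_mul, gaussianWeight]
  ring

variable [FiniteDimensional ℝ E] [MeasurableSpace E] [BorelSpace E]

lemma integrable_gaussianWeight {b : ℝ} (hb : 0 < b) :
    Integrable (gaussianWeight b : E → ℝ) := by
  refine .of_integral_ne_zero ?_
  simp_rw [gaussianWeight, GaussianFourier.integral_rexp_neg_mul_sq_norm (half_pos hb)]
  positivity

variable {μ : Measure E} [μ.IsAddHaarMeasure] {φ u η : E → ℝ}

lemma integral_fderiv_gradient (hφ : ContDiff ℝ 1 φ) (hc : HasCompactSupport φ)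
    (hu : ContDiff ℝ 2 u) :
    ∫ x, fderiv ℝ φ x (∇ u x) ∂μ = -∫ x, φ x * Δ u x ∂μ := by
  set e := stdOrthonormalBasis ℝ E
  have hDu (i) : ContDiff ℝ 1 (fun y ↦ fderiv ℝ u y (e i)) :=
    contDiff_fderiv_apply hu le_rfl (e i)
  have hDφ (i) : Continuous (fun y ↦ fderiv ℝ φ y (e i)) :=
    (contDiff_fderiv_apply (m := 0) hφ le_rfl (e i)).continuous
  have hDDu (i) : Continuous (fun x ↦ fderiv ℝ (fun y ↦ fderiv ℝ u y (e i)) x (e i)) :=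
    (contDiff_fderiv_apply (m := 0) (hDu i) le_rfl (e i)).continuous
  have hint_left (i) : Integrable (fun x ↦ fderiv ℝ φ x (e i) * fderiv ℝ u x (e i)) μ :=
    ((hDφ i).mul (hDu i).continuous).integrable_of_hasCompactSupport
      (hc.fderiv_apply (𝕜 := ℝ) (e i)).mul_right
  have hint_right (i) :
      Integrable (fun x ↦ φ x * fderiv ℝ (fun y ↦ fderiv ℝ u y (e i)) x (e i)) μ :=
    (hφ.continuous.mul (hDDu i)).integrable_of_hasCompactSupport hc.mul_right
  have hint (i) : Integrable (fun x ↦ φ x * fderiv ℝ u x (e i)) μ :=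
    (hφ.continuous.mul (hDu i).continuous).integrable_of_hasCompactSupport hc.mul_right
  have hexpand (x) :
      fderiv ℝ φ x (∇ u x) = ∑ i, fderiv ℝ φ x (e i) * fderiv ℝ u x (e i) := by
    rw [← inner_gradient_left, ← e.sum_inner_mul_inner]
    simp_rw [inner_gradient_left, inner_gradient_right, conj_trivial]
  simp_rw [hexpand, laplacian_eq_sum_fderiv_fderiv e hu, Finset.mul_sum]
  rw [integral_finsetSum _ fun i _ ↦ hint_left i, integral_finsetSum _ fun i _ ↦ hint_right i,
    ← Finset.sum_neg_distrib]
  refine Finset.sum_congr rfl fun i _ ↦ ?_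
  rw [integral_mul_fderiv_eq_neg_fderiv_mul_of_integrable (hint_left i) (hint_right i) (hint i)
    (fun x _ ↦ hφ.differentiable one_ne_zero x)
    (fun x _ ↦ (hDu i).differentiable one_ne_zero x), neg_neg]

lemma integral_gaussianWeight_mul_fderiv_gradient (b : ℝ) (hφ : ContDiff ℝ 1 φ)
    (hc : HasCompactSupport φ) (hu : ContDiff ℝ 2 u) :
    ∫ x, gaussianWeight b x * fderiv ℝ φ x (∇ u x) ∂μ =
      -∫ x, gaussianWeight b x * φ x * ornsteinUhlenbeck b u x ∂μ := by
  set ψ : E → ℝ := fun x ↦ gaussianWeight b x * φ x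
  have hψ : ContDiff ℝ 1 ψ := (contDiff_gaussianWeight b).mul hφ
  have hψc : HasCompactSupport ψ := hc.mul_left
  have hDψ (x) : gaussianWeight b x * fderiv ℝ φ x (∇ u x) =
      fderiv ℝ ψ x (∇ u x) + ψ x * (b * fderiv ℝ u x x) := by
    rw [fderiv_fun_mul ((contDiff_gaussianWeight b).differentiable one_ne_zero x)
      (hφ.differentiable one_ne_zero x), ← inner_gradient_left (f := u), real_inner_comm]
    simp only [_root_.add_apply, _root_.smul_apply, smul_eq_mul, fderiv_gaussianWeight_apply, ψ]
    ring
  have hDu : Continuous (fderiv ℝ u) := hu.continuous_fderiv two_ne_zero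
  have hint_fderiv : Integrable (fun x ↦ fderiv ℝ ψ x (∇ u x)) μ :=
    (continuous_fderiv_gradient hψ (hu.of_le one_le_two)).integrable_of_hasCompactSupport
      (hasCompactSupport_fderiv_gradient hψc u)
  have hint_drift : Integrable (fun x ↦ ψ x * (b * fderiv ℝ u x x)) μ :=
    (hψ.continuous.mul (by fun_prop)).integrable_of_hasCompactSupport hψc.mul_right
  have hint_laplacian : Integrable (fun x ↦ ψ x * Δ u x) μ :=
    Continuous.integrable_of_hasCompactSupport
      (hψ.continuous.mul (contDiff_laplacian (m := 0) (by simpa using hu)).continuous)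
      hψc.mul_right
  simp_rw [hDψ, ornsteinUhlenbeck, smul_eq_mul, mul_sub]
  rw [integral_add hint_fderiv hint_drift, integral_fderiv_gradient hψ hψc hu,
    integral_sub hint_laplacian hint_drift]
  ring

/-- Test the inequality `L u ≤ 0` against `η ^ 2 / u`. -/
theorem caccioppoli_gaussianWeight (b : ℝ) (hu : ContDiff ℝ 2 u) (hpos : ∀ x, 0 < u x)
    (hL : ∀ x, ornsteinUhlenbeck b u x ≤ 0) (hη : ContDiff ℝ 1 η) (hc : HasCompactSupport η) :
    ∫ x, gaussianWeight b x * (η x * (‖fderiv ℝ u x‖ / u x)) ^ 2 ∂μ ≤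
      4 * ∫ x, gaussianWeight b x * ‖fderiv ℝ η x‖ ^ 2 ∂μ := by
  set φ : E → ℝ := fun x ↦ η x ^ 2 / u x
  have hφ : ContDiff ℝ 1 φ := (hη.pow 2).div (hu.of_le one_le_two) fun x ↦ (hpos x).ne'
  have hη2c : HasCompactSupport (fun x ↦ η x ^ 2) := hc.comp_left (g := (· ^ 2)) (by simp)
  have hφc : HasCompactSupport φ := hη2c.mul_right
  have hnonneg : 0 ≤ ∫ x, gaussianWeight b x * fderiv ℝ φ x (∇ u x) ∂μ := by
    rw [integral_gaussianWeight_mul_fderiv_gradient b hφ hφc hu, ← integral_neg]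
    refine integral_nonneg fun x ↦ neg_nonneg.2 (mul_nonpos_of_nonneg_of_nonpos ?_ (hL x))
    have := gaussianWeight_pos b x
    have := hpos x
    positivity
  have hpointwise (x) : gaussianWeight b x * (η x * (‖fderiv ℝ u x‖ / u x)) ^ 2 ≤
      4 * (gaussianWeight b x * ‖fderiv ℝ η x‖ ^ 2) -
        2 * (gaussianWeight b x * fderiv ℝ φ x (∇ u x)) := by
    have hle := sq_le_sub_fderiv_sq_div_gradient (hη.differentiable one_ne_zero x)
      (hu.differentiable two_ne_zero x) (hpos x).ne'
    linear_combination mul_le_mul_of_nonneg_left hle (gaussianWeight_pos b x).le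
  have hρ : Continuous (gaussianWeight b : E → ℝ) := continuous_gaussianWeight b
  have hint_cutoff : Integrable (fun x ↦ gaussianWeight b x * ‖fderiv ℝ η x‖ ^ 2) μ :=
    Continuous.integrable_of_hasCompactSupport
      (hρ.mul ((hη.continuous_fderiv one_ne_zero).norm.pow 2))
      ((hc.fderiv (𝕜 := ℝ)).norm.comp_left (g := (· ^ 2)) (by simp)).mul_left
  have hint_test : Integrable (fun x ↦ gaussianWeight b x * fderiv ℝ φ x (∇ u x)) μ :=
    Continuous.integrable_of_hasCompactSupport
      (hρ.mul (continuous_fderiv_gradient hφ (hu.of_le one_le_two)))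
      (hasCompactSupport_fderiv_gradient hφc u).mul_left
  calc ∫ x, gaussianWeight b x * (η x * (‖fderiv ℝ u x‖ / u x)) ^ 2 ∂μ
    _ ≤ ∫ x, (4 * (gaussianWeight b x * ‖fderiv ℝ η x‖ ^ 2) -
          2 * (gaussianWeight b x * fderiv ℝ φ x (∇ u x))) ∂μ :=
        integral_mono_of_nonneg
          (.of_forall fun x ↦ mul_nonneg (gaussianWeight_pos b x).le (sq_nonneg _))
          ((hint_cutoff.const_mul 4).sub (hint_test.const_mul 2)) (.of_forall hpointwise)
    _ = 4 * ∫ x, gaussianWeight b x * ‖fderiv ℝ η x‖ ^ 2 ∂μ -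
          2 * ∫ x, gaussianWeight b x * fderiv ℝ φ x (∇ u x) ∂μ := by
        rw [integral_sub (hint_cutoff.const_mul 4) (hint_test.const_mul 2),
          integral_const_mul, integral_const_mul]
    _ ≤ 4 * ∫ x, gaussianWeight b x * ‖fderiv ℝ η x‖ ^ 2 ∂μ := by linarith

end Gaussian

section Liouville

open MeasureTheory Metric Topology

variable {E : Type*} [NormedAddCommGroup E]

lemma exists_contDiff_eqOn_closedBall_norm_fderiv_le (E : Type*) [NormedAddCommGroup E]
    [NormedSpace ℝ E] [FiniteDimensional ℝ E] :
    ∃ C, ∀ R > 0, ∃ η : E → ℝ, ContDiff ℝ 1 η ∧ HasCompactSupport η ∧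
      Set.EqOn η 1 (closedBall 0 R) ∧ ∀ x, ‖fderiv ℝ η x‖ ≤ C / R := by
  let f : ContDiffBump (0 : E) := ⟨1, 2, one_pos, one_lt_two⟩
  have hf : ContDiff ℝ 1 f := f.contDiff
  obtain ⟨C, hC⟩ := (f.hasCompactSupport.fderiv (𝕜 := ℝ)).exists_bound_of_continuous
    (hf.continuous_fderiv one_ne_zero)
  refine ⟨C, fun R hR ↦ ⟨fun x ↦ f (R⁻¹ • x), hf.comp (contDiff_const_smul _),
    f.hasCompactSupport.comp_smul (inv_ne_zero hR.ne'), fun x hx ↦ ?_, fun x ↦ ?_⟩⟩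
  · refine f.one_of_mem_closedBall (mem_closedBall_zero_iff.2 ?_)
    rw [norm_smul, norm_inv, Real.norm_of_nonneg hR.le]
    exact inv_mul_le_one_of_le₀ (mem_closedBall_zero_iff.1 hx) hR.le
  · rw [fderiv_comp_smul, norm_smul, norm_inv, Real.norm_of_nonneg hR.le, div_eq_inv_mul]
    gcongr
    exact hC _

lemma eq_zero_of_setIntegral_closedBall_le_of_tendsto_zero {X : Type*} [PseudoMetricSpace X]
    [ProperSpace X] [MeasurableSpace X] [BorelSpace X] {μ : Measure X} [μ.IsOpenPosMeasure]
    [IsFiniteMeasureOnCompacts μ] {g : X → ℝ} (hg : Continuous g) (hg0 : 0 ≤ g) (c : X)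
    {K : ℝ → ℝ} (hK : Tendsto K atTop (𝓝 0))
    (hle : ∀ᶠ R in atTop, ∫ x in closedBall c R, g x ∂μ ≤ K R) : g = 0 := by
  have hint (R) : IntegrableOn g (closedBall c R) μ :=
    hg.continuousOn.integrableOn_compact' (isCompact_closedBall c R) measurableSet_closedBall
  have hzero (r) : ∫ x in closedBall c r, g x ∂μ = 0 := by
    refine (ge_of_tendsto hK ?_).antisymm (integral_nonneg hg0)
    filter_upwards [hle, eventually_ge_atTop r] with R hR hrR
    exact (setIntegral_mono_set (hint R) (.of_forall hg0)
      (closedBall_subset_closedBall hrR).eventuallyLE).trans hR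
  funext x
  have hae : g =ᵐ[μ.restrict (closedBall c (dist x c + 1))] 0 :=
    (setIntegral_eq_zero_iff_of_nonneg_ae (.of_forall hg0) (hint _)).1 (hzero _)
  exact Measure.eqOn_open_of_ae_eq (ae_restrict_of_ae_restrict_of_subset ball_subset_closedBall hae)
    isOpen_ball hg.continuousOn continuousOn_const (mem_ball.2 (lt_add_one _))

variable [InnerProductSpace ℝ E] [FiniteDimensional ℝ E] {u : E → ℝ} {b : ℝ}

lemma exists_setIntegral_gaussianWeight_mul_sq_le [MeasurableSpace E] [BorelSpace E] (hb : 0 < b)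
    (hu : ContDiff ℝ 2 u) (hpos : ∀ x, 0 < u x) (hL : ∀ x, ornsteinUhlenbeck b u x ≤ 0) :
    ∃ K, ∀ R > 0,
      ∫ x in closedBall 0 R, gaussianWeight b x * (‖fderiv ℝ u x‖ / u x) ^ 2 ≤ K / R ^ 2 := by
  obtain ⟨C, hC⟩ := exists_contDiff_eqOn_closedBall_norm_fderiv_le E
  refine ⟨4 * (C ^ 2 * ∫ x : E, gaussianWeight b x), fun R hR ↦ ?_⟩
  obtain ⟨η, hη, hηc, hη1, hDη⟩ := hC R hR
  have hnonneg (x) : 0 ≤ gaussianWeight b x * (η x * (‖fderiv ℝ u x‖ / u x)) ^ 2 :=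
    mul_nonneg (gaussianWeight_pos b x).le (sq_nonneg _)
  have hint : Integrable (fun x ↦ gaussianWeight b x * (η x * (‖fderiv ℝ u x‖ / u x)) ^ 2) :=
    Continuous.integrable_of_hasCompactSupport
      ((continuous_gaussianWeight b).mul ((hη.continuous.mul
        ((hu.continuous_fderiv two_ne_zero).norm.div hu.continuous fun x ↦ (hpos x).ne')).pow 2))
      (hηc.mul_right.comp_left (g := (· ^ 2)) (by simp)).mul_left
  calc ∫ x in closedBall 0 R, gaussianWeight b x * (‖fderiv ℝ u x‖ / u x) ^ 2
    _ = ∫ x in closedBall 0 R, gaussianWeight b x * (η x * (‖fderiv ℝ u x‖ / u x)) ^ 2 :=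
        setIntegral_congr_fun measurableSet_closedBall fun x hx ↦ by simp [hη1 hx]
    _ ≤ ∫ x, gaussianWeight b x * (η x * (‖fderiv ℝ u x‖ / u x)) ^ 2 :=
        setIntegral_le_integral hint (.of_forall hnonneg)
    _ ≤ 4 * ∫ x, gaussianWeight b x * ‖fderiv ℝ η x‖ ^ 2 :=
        caccioppoli_gaussianWeight b hu hpos hL hη hηc
    _ ≤ 4 * ∫ x, gaussianWeight b x * (C / R) ^ 2 := by
        gcongr ?_ * ?_
        refine integral_mono_of_nonneg
          (.of_forall fun x ↦ mul_nonneg (gaussianWeight_pos b x).le (sq_nonneg _))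
          ((integrable_gaussianWeight hb).mul_const _) (.of_forall fun x ↦ ?_)
        have := (gaussianWeight_pos b x).le
        dsimp only
        gcongr
        exact hDη x
    _ = 4 * (C ^ 2 * ∫ x, gaussianWeight b x) / R ^ 2 := by
        rw [integral_mul_const]
        ring

lemma fderiv_eq_zero_of_pos_of_ornsteinUhlenbeck_nonpos (hb : 0 < b) (hu : ContDiff ℝ 2 u)
    (hpos : ∀ x, 0 < u x) (hL : ∀ x, ornsteinUhlenbeck b u x ≤ 0) (x : E) :
    fderiv ℝ u x = 0 := by
  borelize E
  obtain ⟨K, hK⟩ := exists_setIntegral_gaussianWeight_mul_sq_le hb hu hpos hL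
  have hcont : Continuous fun x ↦ gaussianWeight b x * (‖fderiv ℝ u x‖ / u x) ^ 2 :=
    (continuous_gaussianWeight b).mul
      (((hu.continuous_fderiv two_ne_zero).norm.div hu.continuous fun x ↦ (hpos x).ne').pow 2)
  have hzero := eq_zero_of_setIntegral_closedBall_le_of_tendsto_zero hcont
    (fun x ↦ mul_nonneg (gaussianWeight_pos b x).le (sq_nonneg _)) 0
    (tendsto_const_nhds.div_atTop (tendsto_pow_atTop two_ne_zero))
    ((eventually_gt_atTop 0).mono hK)
  simpa [(gaussianWeight_pos b x).ne', (hpos x).ne'] using congrFun hzero x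

theorem eq_of_bddBelow_of_ornsteinUhlenbeck_nonpos (hb : 0 < b) (hu : ContDiff ℝ 2 u)
    (hbdd : BddBelow (Set.range u)) (hL : ∀ x, ornsteinUhlenbeck b u x ≤ 0) (x y : E) :
    u x = u y := by
  obtain ⟨m, hm⟩ := hbdd
  have hpos (z) : 0 < u z + (1 - m) := by linarith [hm (Set.mem_range_self z)]
  have hfderiv := fderiv_eq_zero_of_pos_of_ornsteinUhlenbeck_nonpos hb (hu.add contDiff_const) hpos
    fun z ↦ (ornsteinUhlenbeck_add_const b hu (1 - m) z).trans_le (hL z)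
  refine is_const_of_fderiv_eq_zero (hu.differentiable two_ne_zero) (fun z ↦ ?_) x y
  rw [← hfderiv z, fderiv_add_const]

end Liouville

section Bernstein

open Laplacian Gradient

variable {E : Type*} [NormedAddCommGroup E] [InnerProductSpace ℝ E] [FiniteDimensional ℝ E]
  {w : E → ℝ} {a b : ℝ}

lemma ornsteinUhlenbeck_eq_smul_of_semilinear (ha : a ≠ 0)
    (heq : ∀ x, a * Δ w x = (1 / 2) * ⟪x, ∇ w x⟫ - w x) (x : E) :
    ornsteinUhlenbeck (1 / (2 * a)) w x = (-2 * (1 / (2 * a))) • w x := by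
  have h := heq x
  rw [inner_gradient_right, conj_trivial] at h
  rw [ornsteinUhlenbeck, smul_eq_mul, smul_eq_mul]
  field_simp
  linear_combination 2 * h

lemma ornsteinUhlenbeck_fderiv_fderiv_apply_eq_zero (hw : ContDiff ℝ 4 w)
    (hL : ∀ x, ornsteinUhlenbeck b w x = (-2 * b) • w x) (e x : E) :
    ornsteinUhlenbeck b (fun y ↦ fderiv ℝ (fderiv ℝ w) y e e) x = 0 := by
  have hDDw (y) : fderiv ℝ (fun z ↦ fderiv ℝ w z e) y e = fderiv ℝ (fderiv ℝ w) y e e :=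
    fderiv_fderiv_apply (differentiable_fderiv (hw.of_le (by norm_num)) y) e e
  simp_rw [← hDDw]
  rw [ornsteinUhlenbeck_fderiv_apply_of_eigenfunction (contDiff_fderiv_apply hw le_rfl e)
    fun y ↦ ornsteinUhlenbeck_fderiv_apply_of_eigenfunction (hw.of_le (by norm_num)) hL y e]
  module

theorem bernstein_semilinear_general (ha : 0 < a) (hw : ContDiff ℝ 4 w)
    (hbdd : ∀ e, BddBelow (Set.range fun x ↦ fderiv ℝ (fderiv ℝ w) x e e))
    (heq : ∀ x, a * Δ w x = (1 / 2) * ⟪x, ∇ w x⟫ - w x) (x : E) :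
    w x = w 0 + fderiv ℝ w 0 x + (1 / 2 : ℝ) • fderiv ℝ (fderiv ℝ w) 0 x x := by
  have hb : 0 < 1 / (2 * a) := by positivity
  have hDDw : ContDiff ℝ 2 (fun y ↦ fderiv ℝ (fderiv ℝ w) y x x) :=
    ((hw.fderiv_right (m := 3) le_rfl).fderiv_right (m := 2) le_rfl).clm_apply contDiff_const
      |>.clm_apply contDiff_const
  have hL (y) : ornsteinUhlenbeck (1 / (2 * a)) (fun z ↦ fderiv ℝ (fderiv ℝ w) z x x) y = 0 :=
    ornsteinUhlenbeck_fderiv_fderiv_apply_eq_zero hw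
      (ornsteinUhlenbeck_eq_smul_of_semilinear ha.ne' heq) x y
  have hconst (y) : fderiv ℝ (fderiv ℝ w) y x x = fderiv ℝ (fderiv ℝ w) 0 x x :=
    eq_of_bddBelow_of_ornsteinUhlenbeck_nonpos hb hDDw (hbdd x) (fun z ↦ (hL z).le) y 0
  simpa only [zero_add] using eq_taylor_two_of_fderiv_fderiv_eq (hw.of_le (by norm_num)) hconst

end Bernstein

section Hessian

open InnerProductSpace Laplacian Gradient

variable {n : ℕ} {u : EuclideanSpace ℝ (Fin n) → ℝ} {x : EuclideanSpace ℝ (Fin n)}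

lemma trace_Hess (u : EuclideanSpace ℝ (Fin n) → ℝ) (x : EuclideanSpace ℝ (Fin n)) :
    (Hess n u x).trace = Δ u x := by
  simp [Hess, Matrix.trace,
    laplacian_eq_iteratedFDeriv_orthonormalBasis u (EuclideanSpace.basisFun (Fin n) ℝ)]

lemma Hess_apply (u : EuclideanSpace ℝ (Fin n) → ℝ) (x : EuclideanSpace ℝ (Fin n)) (i j : Fin n) :
    Hess n u x i j =
      fderiv ℝ (fderiv ℝ u) x (EuclideanSpace.single i 1) (EuclideanSpace.single j 1) :=
  iteratedFDeriv_two_apply u x _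

lemma isSymm_Hess (hu : ContDiff ℝ 2 u) (x : EuclideanSpace ℝ (Fin n)) : (Hess n u x).IsSymm :=
  Matrix.IsSymm.ext fun i j ↦ by
    simp_rw [Hess_apply]
    exact isSymmSndFDerivAt_of_contDiff hu x _ _

lemma fderiv_fderiv_apply_eq_sum_Hess (u : EuclideanSpace ℝ (Fin n) → ℝ)
    (x v : EuclideanSpace ℝ (Fin n)) :
    fderiv ℝ (fderiv ℝ u) x v v = ∑ i, ∑ j, Hess n u x i j * v i * v j := by
  conv_lhs => rw [← (EuclideanSpace.basisFun (Fin n) ℝ).sum_repr v]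
  simp only [map_sum, map_smul, _root_.sum_apply, _root_.smul_apply, smul_eq_mul, Finset.mul_sum,
    EuclideanSpace.basisFun_repr, EuclideanSpace.basisFun_apply, Hess_apply]
  rw [Finset.sum_comm]
  exact Finset.sum_congr rfl fun i _ ↦ Finset.sum_congr rfl fun j _ ↦ by ring

lemma fderiv_fderiv_apply_self_nonneg_of_posSemidef_Hess (h : (Hess n u x).PosSemidef)
    (v : EuclideanSpace ℝ (Fin n)) : 0 ≤ fderiv ℝ (fderiv ℝ u) x v v := by
  rw [fderiv_fderiv_apply_eq_sum_Hess]
  calc 0 ≤ star v.ofLp ⬝ᵥ Hess n u x *ᵥ v := h.dotProduct_mulVec_nonneg v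
    _ = ∑ i, ∑ j, Hess n u x i j * v i * v j := by
        simp only [dotProduct, mulVec, Finset.mul_sum, star_trivial]
        exact Finset.sum_congr rfl fun i _ ↦ Finset.sum_congr rfl fun j _ ↦ by ring

lemma isQuadPoly_of_eq_taylor_two (hu : ContDiff ℝ 2 u)
    (h : ∀ x, u x = u 0 + fderiv ℝ u 0 x + (1 / 2 : ℝ) • fderiv ℝ (fderiv ℝ u) 0 x x) :
    IsQuadPoly n u := by
  refine ⟨Hess n u 0, ∇ u 0, u 0, isSymm_Hess hu 0, fun x ↦ ?_⟩
  rw [h x, fderiv_fderiv_apply_eq_sum_Hess, inner_gradient_left, smul_eq_mul]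
  ring

end Hessian

theorem bernstein_semilinear (n : ℕ) (hn : 1 ≤ n)
    (w : EuclideanSpace ℝ (Fin n) → ℝ)
    (hw : ContDiff ℝ (⊤ : ℕ∞) w)
    (hconv : ∀ x, (Hess n w x).PosDef)
    (heq : ∀ x, Real.sqrt 2 * (Hess n w x).trace
      = (1/2) * ⟪x, gradient w x⟫ - w x) :
    IsQuadPoly n w := by
  have hw' {m : ℕ} : ContDiff ℝ m w := hw.of_le (by exact_mod_cast le_top)
  have hbdd (e) : BddBelow (Set.range fun x ↦ fderiv ℝ (fderiv ℝ w) x e e) :=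
    ⟨0, Set.forall_mem_range.2 fun x ↦
      fderiv_fderiv_apply_self_nonneg_of_posSemidef_Hess (hconv x).posSemidef e⟩
  exact isQuadPoly_of_eq_taylor_two hw' <|
    bernstein_semilinear_general (by positivity) hw' hbdd fun x ↦ trace_Hess w x ▸ heq x
end
end

section
/- For any real numbers a₀ and a₁, there exists a C² function φ : ℝ → ℝ defined on all of ℝ with φ(0) = a₀ and φ'(0) = a₁ that satisfies the ordinary differential equation φ''(t) = (e^{φ(t)} / (2(1 + e^{φ(t)})²)) · t · φ'(t) for all t ∈ ℝ. -/
open Real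

/-!
Let `σ` be the sigmoid function. Since `σ' = exp / (1 + exp) ^ 2`, the equation reads
`φ'' = g σ'(φ) φ'` with `g t = t / 2`, that is, `(g σ(φ) - φ')' = g' σ(φ)`. In the Liénard
coordinates `(φ, ψ)` with `ψ = g σ(φ) - φ'` it becomes the first-order system
`φ' = g σ(φ) - ψ`, `ψ' = g' σ(φ)`. Because `σ` is Lipschitz, this field is Lipschitz in `(φ, ψ)`
with a constant bounded on bounded time intervals. For such a continuous field the Picard iterates
started at any curve converge locally uniformly on all of `ℝ`: the `n`-th increments on
`[t₀ - R, t₀ + R]` are at most `C (L R) ^ n / n!`.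
-/

open Filter Function Metric Set
open scoped NNReal Topology

section PicardMap

variable {E : Type*} [NormedAddCommGroup E] [NormedSpace ℝ E] {v : ℝ → E → E}

/-- The Picard operator `α ↦ x₀ + ∫ τ in t₀..·, v τ (α τ)` of a continuous time-dependent vector
field `v`, acting on curves defined for all times. It is bundled as a self-map of `C(ℝ, E)` so that
its iterates can be studied in the compact-open topology. -/
noncomputable def picardMap (hv : Continuous (uncurry v)) (t₀ : ℝ) (x₀ : E) (α : C(ℝ, E)) :
    C(ℝ, E) where
  toFun := ODE.picard v t₀ x₀ α
  continuous_toFun := by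
    have hvα : Continuous fun τ ↦ v τ (α τ) := hv.comp₂ continuous_id α.continuous
    exact continuous_const.add
      (intervalIntegral.continuous_primitive (fun a b ↦ hvα.intervalIntegrable a b) t₀)

variable (hv : Continuous (uncurry v)) (t₀ : ℝ) (x₀ : E)

lemma picardMap_apply (α : C(ℝ, E)) (t : ℝ) :
    picardMap hv t₀ x₀ α t = x₀ + ∫ τ in t₀..t, v τ (α τ) := rfl

lemma continuous_picardMap : Continuous (picardMap hv t₀ x₀) := by
  refine ContinuousMap.continuous_of_continuous_uncurry _ (continuous_const.add ?_)
  have hvα : Continuous (uncurry fun (α : C(ℝ, E)) τ ↦ v τ (α τ)) :=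
    hv.comp₂ continuous_snd (by fun_prop)
  exact intervalIntegral.continuous_parametric_primitive_of_continuous hvα

lemma dist_picardMap_apply_le {R C : ℝ} {K : ℝ≥0} {n : ℕ}
    (hK : ∀ t ∈ closedBall t₀ R, LipschitzWith K (v t)) {α β : C(ℝ, E)}
    (hαβ : ∀ t ∈ closedBall t₀ R, dist (α t) (β t) ≤ C * |t - t₀| ^ n)
    {t : ℝ} (ht : t ∈ closedBall t₀ R) :
    dist (picardMap hv t₀ x₀ α t) (picardMap hv t₀ x₀ β t)
      ≤ K * C / (n + 1) * |t - t₀| ^ (n + 1) := by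
  have hint (γ : C(ℝ, E)) : IntervalIntegrable (fun τ ↦ v τ (γ τ)) MeasureTheory.volume t₀ t :=
    (hv.comp₂ continuous_id γ.continuous).intervalIntegrable _ _
  have hsub : uIoc t₀ t ⊆ closedBall t₀ R :=
    uIoc_subset_uIcc.trans <| (convex_closedBall t₀ R).ordConnected.uIcc_subset
      (mem_closedBall_self (dist_nonneg.trans ht)) ht
  have hbound : ∀ τ ∈ uIoc t₀ t, ‖v τ (α τ) - v τ (β τ)‖ ≤ K * C * |τ - t₀| ^ n := fun τ hτ ↦
    calc ‖v τ (α τ) - v τ (β τ)‖ ≤ K * dist (α τ) (β τ) := by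
          rw [← dist_eq_norm]; exact (hK τ (hsub hτ)).dist_le_mul _ _
      _ ≤ K * (C * |τ - t₀| ^ n) := by gcongr; exact hαβ τ (hsub hτ)
      _ = K * C * |τ - t₀| ^ n := by ring
  calc dist (picardMap hv t₀ x₀ α t) (picardMap hv t₀ x₀ β t)
      = ‖∫ τ in t₀..t, v τ (α τ) - v τ (β τ)‖ := by
        rw [picardMap_apply, picardMap_apply, dist_add_left, dist_eq_norm,
          intervalIntegral.integral_sub (hint α) (hint β)]
    _ = ‖∫ τ in uIoc t₀ t, v τ (α τ) - v τ (β τ)‖ := intervalIntegral.norm_intervalIntegral_eq ..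
    _ ≤ ∫ τ in uIoc t₀ t, K * C * |τ - t₀| ^ n :=
        MeasureTheory.norm_integral_le_of_norm_le (Continuous.integrableOn_uIoc (by fun_prop))
          (MeasureTheory.ae_restrict_of_forall_mem measurableSet_uIoc hbound)
    _ = K * C / (n + 1) * |t - t₀| ^ (n + 1) := by
        rw [MeasureTheory.integral_const_mul, integral_pow_abs_sub_uIoc]; ring

lemma dist_iterate_picardMap_apply_le {R C : ℝ} {K : ℝ≥0}
    (hK : ∀ t ∈ closedBall t₀ R, LipschitzWith K (v t)) {α β : C(ℝ, E)}
    (hαβ : ∀ t ∈ closedBall t₀ R, dist (α t) (β t) ≤ C) (n : ℕ) :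
    ∀ t ∈ closedBall t₀ R,
      dist ((picardMap hv t₀ x₀)^[n] α t) ((picardMap hv t₀ x₀)^[n] β t)
        ≤ C * K ^ n / n.factorial * |t - t₀| ^ n := by
  induction n with
  | zero => simpa using hαβ
  | succ n ih =>
    intro t ht
    rw [iterate_succ_apply', iterate_succ_apply']
    refine (dist_picardMap_apply_le hv t₀ x₀ hK ih ht).trans_eq ?_
    rw [Nat.factorial_succ]
    push_cast
    field_simp
    ring

lemma summable_iterate_succ_sub_picardMap [CompleteSpace E] {K : ℝ → ℝ≥0}
    (hK : Continuous K) (hvK : ∀ t, LipschitzWith (K t) (v t)) (α : C(ℝ, E)) :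
    Summable fun n ↦ (picardMap hv t₀ x₀)^[n + 1] α - (picardMap hv t₀ x₀)^[n] α := by
  refine ContinuousMap.summable_of_locally_summable_norm fun S ↦ ?_
  obtain ⟨R, hR, hSR⟩ := S.isCompact.isBounded.subset_closedBall_lt 0 t₀
  have hcpt := isCompact_closedBall t₀ R
  obtain ⟨L, hL⟩ := (hcpt.image hK).bddAbove
  have hvL : ∀ t ∈ closedBall t₀ R, LipschitzWith L (v t) := fun t ht ↦
    (hvK t).weaken (hL (mem_image_of_mem K ht))
  obtain ⟨C, hC⟩ := (hcpt.image
    (by fun_prop : Continuous fun t ↦ dist (picardMap hv t₀ x₀ α t) (α t))).bddAbove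
  have hαC : ∀ t ∈ closedBall t₀ R, dist (picardMap hv t₀ x₀ α t) (α t) ≤ C := fun t ht ↦
    hC (mem_image_of_mem _ ht)
  have hC₀ : 0 ≤ C := dist_nonneg.trans (hαC t₀ (mem_closedBall_self hR.le))
  refine ((Real.summable_pow_div_factorial (L * R)).mul_left C).of_norm_bounded fun n ↦ ?_
  rw [norm_norm, ContinuousMap.norm_le _ (by positivity)]
  rintro ⟨t, ht⟩
  calc ‖(picardMap hv t₀ x₀)^[n + 1] α t - (picardMap hv t₀ x₀)^[n] α t‖
      ≤ C * L ^ n / n.factorial * |t - t₀| ^ n := by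
        rw [← dist_eq_norm, iterate_succ_apply]
        exact dist_iterate_picardMap_apply_le hv t₀ x₀ hvL hαC n t (hSR ht)
    _ ≤ C * L ^ n / n.factorial * R ^ n := by gcongr; exact hSR ht
    _ = C * ((L * R) ^ n / n.factorial) := by ring

lemma exists_isFixedPt_picardMap [CompleteSpace E] {K : ℝ → ℝ≥0}
    (hK : Continuous K) (hvK : ∀ t, LipschitzWith (K t) (v t)) :
    ∃ γ : C(ℝ, E), IsFixedPt (picardMap hv t₀ x₀) γ := by
  let α : C(ℝ, E) := .const ℝ x₀
  obtain ⟨σ, hσ⟩ := summable_iterate_succ_sub_picardMap hv t₀ x₀ hK hvK α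
  have hlim : Tendsto (fun n ↦ (picardMap hv t₀ x₀)^[n] α) atTop (𝓝 (σ + α)) := by
    refine (hσ.tendsto_sum_nat.add_const α).congr fun n ↦ ?_
    rw [Finset.sum_range_sub fun n ↦ (picardMap hv t₀ x₀)^[n] α, iterate_zero_apply, sub_add_cancel]
  exact ⟨σ + α, isFixedPt_of_tendsto_iterate hlim (continuous_picardMap hv t₀ x₀).continuousAt⟩

end PicardMap

theorem exists_isIntegralCurve_of_lipschitzWith {E : Type*} [NormedAddCommGroup E]
    [NormedSpace ℝ E] [CompleteSpace E] {v : ℝ → E → E} (hv : Continuous (uncurry v))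
    {K : ℝ → ℝ≥0} (hK : Continuous K) (hvK : ∀ t, LipschitzWith (K t) (v t)) (t₀ : ℝ) (x₀ : E) :
    ∃ γ : ℝ → E, γ t₀ = x₀ ∧ IsIntegralCurve γ v := by
  obtain ⟨γ, hγ⟩ := exists_isFixedPt_picardMap hv t₀ x₀ hK hvK
  have hγ_eq (t : ℝ) : γ t = x₀ + ∫ τ in t₀..t, v τ (γ τ) := DFunLike.congr_fun hγ.symm t
  have hvγ : Continuous fun τ ↦ v τ (γ τ) := hv.comp₂ continuous_id γ.continuous
  refine ⟨γ, by simp [hγ_eq t₀], fun t ↦ ?_⟩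
  have hderiv := (hvγ.integral_hasStrictDerivAt t₀ t).hasDerivAt.const_add x₀
  simpa only [← hγ_eq] using! hderiv

lemma contDiff_two_iff_deriv {𝕜 F : Type*} [NontriviallyNormedField 𝕜] [NormedAddCommGroup F]
    [NormedSpace 𝕜 F] {φ : 𝕜 → F} :
    ContDiff 𝕜 2 φ ↔
      Differentiable 𝕜 φ ∧ Differentiable 𝕜 (deriv φ) ∧ Continuous (deriv (deriv φ)) := by
  rw [← one_add_one_eq_two, contDiff_succ_iff_deriv, contDiff_one_iff_deriv]
  simp

section Lienard

variable {F : Type*} [NormedAddCommGroup F] [NormedSpace ℝ F] {g : ℝ → ℝ} {f : F → F}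

/-- The first-order form of `φ'' = g f'(φ) φ'` in the Liénard coordinates `(φ, g f(φ) - φ')`. The
derivative of `f` does not enter the field, so the field is Lipschitz as soon as `f` is. -/
noncomputable def lienardField (g : ℝ → ℝ) (f : F → F) (t : ℝ) (p : F × F) : F × F :=
  (g t • f p.1 - p.2, deriv g t • f p.1)

lemma continuous_lienardField (hg : ContDiff ℝ 1 g) (hf : Continuous f) :
    Continuous (uncurry (lienardField g f)) := by
  have := hg.continuous_deriv le_rfl
  unfold lienardField uncurry
  fun_prop

variable (g) in
lemma lipschitzWith_lienardField {K : ℝ≥0} (hf : LipschitzWith K f) (t : ℝ) :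
    LipschitzWith (max (‖g t‖₊ * K + 1) (‖deriv g t‖₊ * K)) (lienardField g f t) := by
  have hf_fst : LipschitzWith K fun p : F × F ↦ f p.1 := by
    simpa only [mul_one] using! hf.comp LipschitzWith.prod_fst
  exact (((lipschitzWith_smul (g t)).comp hf_fst).sub LipschitzWith.prod_snd).prodMk
    ((lipschitzWith_smul (deriv g t)).comp hf_fst)

lemma hasDerivAt_fst_of_isIntegralCurve_lienardField {γ : ℝ → F × F}
    (hγ : IsIntegralCurve γ (lienardField g f)) (t : ℝ) :
    HasDerivAt (fun s ↦ (γ s).1) (g t • f (γ t).1 - (γ t).2) t :=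
  (hγ t).fst

lemma hasDerivAt_deriv_fst_of_isIntegralCurve_lienardField
    (hg : Differentiable ℝ g) (hf : Differentiable ℝ f) {γ : ℝ → F × F}
    (hγ : IsIntegralCurve γ (lienardField g f)) (t : ℝ) :
    HasDerivAt (deriv fun s ↦ (γ s).1)
      (g t • fderiv ℝ f (γ t).1 (deriv (fun s ↦ (γ s).1) t)) t := by
  have hγ₁ := hasDerivAt_fst_of_isIntegralCurve_lienardField hγ
  have hfγ : HasDerivAt (fun s ↦ f (γ s).1)
      (fderiv ℝ f (γ t).1 (g t • f (γ t).1 - (γ t).2)) t :=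
    (hf (γ t).1).hasFDerivAt.comp_hasDerivAt t (hγ₁ t)
  rw [funext fun s ↦ (hγ₁ s).deriv]
  exact (((hg t).hasDerivAt.smul hfγ).sub (hγ t).snd).congr_deriv (add_sub_cancel_right _ _)

theorem ode_global_existence_general [CompleteSpace F] {K : ℝ≥0}
    (hg : ContDiff ℝ 1 g) (hf : ContDiff ℝ 1 f) (hfK : LipschitzWith K f) (t₀ : ℝ) (a₀ a₁ : F) :
    ∃ φ : ℝ → F, ContDiff ℝ 2 φ ∧ φ t₀ = a₀ ∧ deriv φ t₀ = a₁ ∧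
      ∀ t, deriv (deriv φ) t = g t • fderiv ℝ f (φ t) (deriv φ t) := by
  have hK_cont : Continuous fun t ↦ max (‖g t‖₊ * K + 1) (‖deriv g t‖₊ * K) := by
    have := hg.continuous_deriv le_rfl
    fun_prop
  obtain ⟨γ, hγ₀, hγ⟩ := exists_isIntegralCurve_of_lipschitzWith (v := lienardField g f)
    (continuous_lienardField hg hf.continuous) hK_cont (lipschitzWith_lienardField g hfK)
    t₀ (a₀, g t₀ • f a₀ - a₁)
  have hφ := hasDerivAt_fst_of_isIntegralCurve_lienardField hγ
  have hφ' := hasDerivAt_deriv_fst_of_isIntegralCurve_lienardField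
    (hg.differentiable one_ne_zero) (hf.differentiable one_ne_zero) hγ
  have hφ_diff : Differentiable ℝ fun t ↦ (γ t).1 := fun t ↦ (hφ t).differentiableAt
  have hφ'_diff : Differentiable ℝ (deriv fun t ↦ (γ t).1) := fun t ↦ (hφ' t).differentiableAt
  have hφ''_cont : Continuous (deriv (deriv fun t ↦ (γ t).1)) := by
    rw [funext fun t ↦ (hφ' t).deriv]
    exact hg.continuous.smul
      (((hf.continuous_fderiv one_ne_zero).comp hφ_diff.continuous).clm_apply hφ'_diff.continuous)
  refine ⟨fun t ↦ (γ t).1, contDiff_two_iff_deriv.2 ⟨hφ_diff, hφ'_diff, hφ''_cont⟩, ?_, ?_,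
    fun t ↦ (hφ' t).deriv⟩
  · simp only [hγ₀]
  · simp only [(hφ t₀).deriv, hγ₀, sub_sub_cancel]

end Lienard

lemma deriv_sigmoid_eq_exp_div (x : ℝ) : deriv sigmoid x = exp x / (1 + exp x) ^ 2 := by
  rw [(hasDerivAt_sigmoid x).deriv, sigmoid_def, exp_neg]
  field_simp
  ring

lemma lipschitzWith_sigmoid : LipschitzWith 1 sigmoid := by
  refine lipschitzWith_of_nnnorm_deriv_le differentiable_sigmoid fun x ↦ ?_
  rw [← NNReal.coe_le_coe, coe_nnnorm, (hasDerivAt_sigmoid x).deriv, ← sigmoid_neg,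
    Real.norm_of_nonneg (mul_nonneg (sigmoid_nonneg x) (sigmoid_nonneg (-x)))]
  exact mul_le_one₀ (sigmoid_le_one x) (sigmoid_nonneg (-x)) (sigmoid_le_one (-x))

theorem ode_global_existence (a₀ a₁ : ℝ) :
    ∃ φ : ℝ → ℝ, ContDiff ℝ 2 φ ∧ φ 0 = a₀ ∧ deriv φ 0 = a₁ ∧
      ∀ t : ℝ, deriv (deriv φ) t
        = (Real.exp (φ t) / (2 * (1 + Real.exp (φ t)) ^ 2)) * t * deriv φ t := by
  obtain ⟨φ, hφ, hφ₀, hφ₁, hφ''⟩ := ode_global_existence_general (g := fun t ↦ t / 2) (f := sigmoid)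
    (by fun_prop) (contDiff_sigmoid.of_le le_top) lipschitzWith_sigmoid 0 a₀ a₁
  refine ⟨φ, hφ, hφ₀, hφ₁, fun t ↦ ?_⟩
  rw [hφ'', fderiv_eq_deriv_mul, deriv_sigmoid_eq_exp_div, smul_eq_mul]
  field_simp
end

section
/- Let n ≥ 1 and let u : ℝⁿ → ℝ be a C² function with D²u(x) > −I for all x ∈ ℝⁿ, satisfying −√2 · Σ_{i=1}^n 1/(1 + λ_i(D²u(x))) = −u(x) + (1/2)⟨x, Du(x)⟩ for all x ∈ ℝⁿ. Then for every unit vector θ ∈ ℝⁿ, the function r ↦ u(rθ)/r² is strictly decreasing on (0, ∞); consequently u(x) ≤ (max_{|y|=1} u(y)) · |x|² for all x with |x| ≥ 1. -/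
open Real Filter Matrix
open scoped RealInnerProductSpace

noncomputable section

/-!
Since `D²u > -I`, every `1 + λᵢ` is positive, so the equation forces `⟨x, Du x⟩ < 2 u x`. By the
quotient rule the derivative of `r ↦ u (r θ) / r ^ 2` is `r⁻³ (⟨x, Du x⟩ - 2 u x)` at `x = r θ`,
hence negative. The growth bound compares the radii `1` and `‖x‖` on the ray through `x`.
-/

section Eigenvalues

open scoped ComplexOrder

variable {ι : Type*} [Fintype ι] [DecidableEq ι] {𝕜 : Type*} [RCLike 𝕜]

lemma add_eigenvalues_pos_of_posDef_add_algebraMap {A : Matrix ι ι 𝕜} {c : ℝ}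
    (hA : A.IsHermitian) (hAc : (A + algebraMap ℝ _ c).PosDef) (i : ι) :
    0 < c + hA.eigenvalues i := by
  have hmem : hA.eigenvalues i + c ∈ spectrum ℝ (algebraMap ℝ _ c + A) :=
    spectrum.add_mem_add_iff.mpr (hA.eigenvalues_mem_spectrum_real i)
  rw [add_comm (algebraMap ℝ _ c), hAc.isHermitian.spectrum_real_eq_range_eigenvalues] at hmem
  obtain ⟨j, hj⟩ := hmem
  rw [add_comm, ← hj]
  exact hAc.eigenvalues_pos j

lemma one_add_eigs_pos {n : ℕ} {A : Matrix (Fin n) (Fin n) ℝ} (hA : (A + 1).PosDef) (i : Fin n) :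
    0 < 1 + eigs A i := by
  have hherm : A.IsHermitian := by simpa using hA.isHermitian.sub isHermitian_one
  rw [eigs, dif_pos hherm]
  exact add_eigenvalues_pos_of_posDef_add_algebraMap hherm (by rwa [map_one]) i

end Eigenvalues

lemma fderiv_apply_self_lt_two_mul {n : ℕ} [Nonempty (Fin n)] {u : EuclideanSpace ℝ (Fin n) → ℝ}
    {x : EuclideanSpace ℝ (Fin n)} {c : ℝ} (hc : 0 < c) (hadm : (Hess n u x + 1).PosDef)
    (heq : -c * ∑ i, 1 / (1 + eigs (Hess n u x) i) = -u x + (1 / 2) * ⟪x, gradient u x⟫) :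
    fderiv ℝ u x x < 2 * u x := by
  have hsum : 0 < ∑ i, 1 / (1 + eigs (Hess n u x) i) :=
    Finset.sum_pos (fun i _ => one_div_pos.mpr (one_add_eigs_pos hadm i)) Finset.univ_nonempty
  rw [real_inner_comm, inner_gradient_left] at heq
  linarith [mul_pos hc hsum]

lemma strictAntiOn_div_rpow {g : ℝ → ℝ} {p : ℝ} (hg : ∀ r, 0 < r → DifferentiableAt ℝ g r)
    (hlt : ∀ r, 0 < r → r * deriv g r < p * g r) :
    StrictAntiOn (fun r => g r / r ^ p) (Set.Ioi 0) := by
  have hderiv : ∀ r, 0 < r → HasDerivAt (fun r => g r / r ^ p)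
      ((deriv g r * r ^ p - g r * (p * r ^ (p - 1))) / (r ^ p) ^ 2) r := fun r hr =>
    (hg r hr).hasDerivAt.div (hasDerivAt_rpow_const (.inl hr.ne')) (rpow_pos_of_pos hr p).ne'
  refine strictAntiOn_of_deriv_neg (convex_Ioi 0)
    (fun r hr => (hderiv r hr).continuousAt.continuousWithinAt) fun r hr => ?_
  replace hr : 0 < r := interior_subset hr
  have hnum : deriv g r * r ^ p - g r * (p * r ^ (p - 1))
      = (r * deriv g r - p * g r) * r ^ (p - 1) := by
    rw [rpow_sub_one hr.ne']
    field_simp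
  rw [(hderiv r hr).deriv, hnum]
  exact div_neg_of_neg_of_pos
    (mul_neg_of_neg_of_pos (sub_neg.mpr (hlt r hr)) (by positivity)) (by positivity)

section Radial

variable {E : Type*} [NormedAddCommGroup E] [NormedSpace ℝ E] {u : E → ℝ} {p : ℝ}

lemma strictAntiOn_ray_div_rpow {θ : E} (hθ : θ ≠ 0)
    (hu : ∀ x ≠ 0, DifferentiableAt ℝ u x) (hlt : ∀ x ≠ 0, fderiv ℝ u x x < p * u x) :
    StrictAntiOn (fun r : ℝ => u (r • θ) / r ^ p) (Set.Ioi 0) := by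
  have hne : ∀ r : ℝ, 0 < r → r • θ ≠ 0 := fun r hr => smul_ne_zero hr.ne' hθ
  have hderiv : ∀ r : ℝ, 0 < r →
      HasDerivAt (fun r : ℝ => u (r • θ)) (fderiv ℝ u (r • θ) θ) r := fun r hr => by
    have hray : HasDerivAt (fun r : ℝ => r • θ) θ r := by
      simpa only [one_smul, id_eq] using (hasDerivAt_id r).smul_const θ
    exact (hu _ (hne r hr)).hasFDerivAt.comp_hasDerivAt r hray
  refine strictAntiOn_div_rpow (fun r hr => (hderiv r hr).differentiableAt) fun r hr => ?_
  rw [(hderiv r hr).deriv, ← smul_eq_mul, ← map_smul]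
  exact hlt _ (hne r hr)

lemma le_iSup_sphere_mul_norm_rpow
    (hbdd : BddAbove (Set.range fun y : Metric.sphere (0 : E) 1 => u y))
    (hanti : ∀ θ : E, ‖θ‖ = 1 → AntitoneOn (fun r : ℝ => u (r • θ) / r ^ p) (Set.Ici 1))
    {x : E} (hx : 1 ≤ ‖x‖) :
    u x ≤ (⨆ y : Metric.sphere (0 : E) 1, u y) * ‖x‖ ^ p := by
  have hpos : 0 < ‖x‖ := zero_lt_one.trans_le hx
  have hθ : ‖‖x‖⁻¹ • x‖ = 1 := norm_smul_inv_norm (𝕜 := ℝ) (norm_pos_iff.mp hpos)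
  have hle : u x / ‖x‖ ^ p ≤ u (‖x‖⁻¹ • x) := by
    simpa only [smul_inv_smul₀ hpos.ne', one_smul, one_rpow, div_one] using
      hanti _ hθ Set.self_mem_Ici hx hx
  rw [← div_le_iff₀ (rpow_pos_of_pos hpos p)]
  exact hle.trans (le_ciSup hbdd ⟨_, mem_sphere_zero_iff_norm.mpr hθ⟩)

theorem radial_monotonicity_and_quadratic_growth_general [ProperSpace E]
    (hu : ∀ x ≠ 0, DifferentiableAt ℝ u x) (hlt : ∀ x ≠ 0, fderiv ℝ u x x < p * u x) :
    (∀ θ : E, ‖θ‖ = 1 → StrictAntiOn (fun r : ℝ => u (r • θ) / r ^ p) (Set.Ioi 0)) ∧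
    (∀ x : E, 1 ≤ ‖x‖ → u x ≤ (⨆ y : Metric.sphere (0 : E) 1, u y) * ‖x‖ ^ p) := by
  have hanti : ∀ θ : E, ‖θ‖ = 1 → StrictAntiOn (fun r : ℝ => u (r • θ) / r ^ p) (Set.Ioi 0) :=
    fun θ hθ => strictAntiOn_ray_div_rpow (ne_zero_of_norm_ne_zero (hθ ▸ one_ne_zero)) hu hlt
  have hcont : ContinuousOn u (Metric.sphere 0 1) := fun y hy =>
    (hu y (ne_zero_of_mem_unit_sphere ⟨y, hy⟩)).continuousAt.continuousWithinAt
  have hbdd : BddAbove (Set.range fun y : Metric.sphere (0 : E) 1 => u y) := by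
    simpa only [Set.image_eq_range] using (isCompact_sphere 0 1).bddAbove_image hcont
  refine ⟨hanti, fun x => le_iSup_sphere_mul_norm_rpow hbdd fun θ hθ => ?_⟩
  exact (hanti θ hθ).antitoneOn.mono (Set.Ici_subset_Ioi.mpr one_pos)

end Radial

theorem radial_monotonicity_and_quadratic_growth (n : ℕ) (hn : 1 ≤ n)
    (u : EuclideanSpace ℝ (Fin n) → ℝ)
    (hu : ContDiff ℝ 2 u)
    (hadm : ∀ x, (Hess n u x + 1).PosDef)
    (heq : ∀ x, -Real.sqrt 2 * ∑ i, 1 / (1 + eigs (Hess n u x) i)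
      = -u x + (1/2) * ⟪x, gradient u x⟫) :
    (∀ θ : EuclideanSpace ℝ (Fin n), ‖θ‖ = 1 →
      StrictAntiOn (fun r : ℝ => u (r • θ) / r ^ 2) (Set.Ioi (0:ℝ))) ∧
    (∀ x : EuclideanSpace ℝ (Fin n), 1 ≤ ‖x‖ →
      u x ≤ (⨆ y : Metric.sphere (0 : EuclideanSpace ℝ (Fin n)) 1, u ↑y) * ‖x‖ ^ 2) := by
  have : Nonempty (Fin n) := Fin.pos_iff_nonempty.mp hn
  simpa only [rpow_two] using radial_monotonicity_and_quadratic_growth_general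
    (fun x _ => hu.differentiable two_ne_zero x)
    fun x _ => fderiv_apply_self_lt_two_mul (by positivity) (hadm x) (heq x)
end
end

section
/- Let n ≥ 1, 0 < a < 1 and b = √(1 − a²). Let u : ℝⁿ → ℝ be a C² function with D²u(x) > −(a+b)I for all x ∈ ℝⁿ, satisfying (√(a²+1)/b) · Σ_{i=1}^n arctan((λ_i(D²u(x)) + a − b)/(λ_i(D²u(x)) + a + b)) = −u(x) + (1/2)⟨x, Du(x)⟩ for all x ∈ ℝⁿ. Then u has at most quadratic growth: |u(x)| ≤ ( max_{|y|=1} |u(y)| + nπ√(a²+1)/(2b) ) · |x|² for all x with |x| ≥ 1. -/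
/-!
In polar coordinates `-u + (1 / 2) ⟨x, Du⟩ = -u + (r / 2) ∂ᵣu = (r³ / 2) ∂ᵣ(u / r²)`. The arctangent
side of the equation is bounded by some constant `C`, since `|arctan| ≤ π / 2`. Hence both
`(u + C) / r²` and `(-u + C) / r²` are nonincreasing in `r`, and comparing `r = |x|` with `r = 1`
bounds `u` by its values on the unit sphere.
-/

open Real Filter Matrix
open scoped RealInnerProductSpace

noncomputable section

theorem antitoneOn_mul_rpow_neg {g g' : ℝ → ℝ} {p : ℝ} {D : Set ℝ} (hD : Convex ℝ D)
    (hD_pos : D ⊆ Set.Ioi 0) (hg : ∀ t ∈ D, HasDerivAt g (g' t) t)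
    (hle : ∀ t ∈ D, t * g' t ≤ p * g t) :
    AntitoneOn (fun t ↦ g t * t ^ (-p)) D := by
  have hderiv (t : ℝ) (ht : t ∈ D) :
      HasDerivAt (fun t ↦ g t * t ^ (-p)) (t ^ (-p - 1) * (t * g' t - p * g t)) t := by
    have ht_pos : 0 < t := hD_pos ht
    have hpow : t ^ (-p) = t ^ (-p - 1) * t := by
      rw [← rpow_add_one ht_pos.ne', sub_add_cancel]
    refine ((hg t ht).mul (hasDerivAt_rpow_const (p := -p) (.inl ht_pos.ne'))).congr_deriv ?_
    rw [hpow]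
    ring
  refine antitoneOn_of_hasDerivWithinAt_nonpos hD
    (fun t ht ↦ (hderiv t ht).continuousAt.continuousWithinAt)
    (fun t ht ↦ (hderiv t (interior_subset ht)).hasDerivWithinAt) fun t ht ↦ ?_
  have ht_mem := interior_subset ht
  exact mul_nonpos_of_nonneg_of_nonpos (rpow_nonneg (hD_pos ht_mem).le _)
    (sub_nonpos.2 (hle t ht_mem))

section RadialGrowth

variable {E : Type*} [NormedAddCommGroup E] [NormedSpace ℝ E]

theorem map_smul_le_rpow_mul_of_fderiv_apply_self_le {v : E → ℝ} {y : E} {p r : ℝ}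
    (hv : ∀ t : ℝ, 1 ≤ t → DifferentiableAt ℝ v (t • y))
    (hle : ∀ t : ℝ, 1 ≤ t → fderiv ℝ v (t • y) (t • y) ≤ p * v (t • y)) (hr : 1 ≤ r) :
    v (r • y) ≤ r ^ p * v y := by
  have hderiv (t : ℝ) (ht : 1 ≤ t) :
      HasDerivAt (fun t : ℝ ↦ v (t • y)) (fderiv ℝ v (t • y) y) t := by
    have hray : HasDerivAt (fun t : ℝ ↦ t • y) y t := by
      simpa using (hasDerivAt_id t).smul_const y
    exact (hv t ht).hasFDerivAt.comp_hasDerivAt t hray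
  have hanti : AntitoneOn (fun t : ℝ ↦ v (t • y) * t ^ (-p)) (Set.Ici 1) :=
    antitoneOn_mul_rpow_neg (convex_Ici 1) (Set.Ici_subset_Ioi.2 one_pos) hderiv
      fun t ht ↦ by simpa using hle t ht
  have hcompare : v (r • y) * r ^ (-p) ≤ v y := by
    simpa using hanti Set.self_mem_Ici hr hr
  have hr_pos : 0 < r := one_pos.trans_le hr
  rwa [rpow_neg hr_pos.le, ← div_eq_mul_inv, div_le_iff₀' (rpow_pos_of_pos hr_pos p)] at hcompare

theorem abs_add_le_mul_norm_rpow_of_abs_fderiv_apply_self_sub_le {u : E → ℝ} {p C M : ℝ}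
    (hu : ∀ x, 1 ≤ ‖x‖ → DifferentiableAt ℝ u x)
    (hC : ∀ x, 1 ≤ ‖x‖ → |fderiv ℝ u x x - p * u x| ≤ p * C)
    (hM : ∀ y, ‖y‖ = 1 → |u y| ≤ M) {x : E} (hx : 1 ≤ ‖x‖) :
    |u x| + C ≤ (M + C) * ‖x‖ ^ p := by
  have hx_pos : 0 < ‖x‖ := one_pos.trans_le hx
  obtain ⟨y, hy, hxy⟩ : ∃ y : E, ‖y‖ = 1 ∧ ‖x‖ • y = x :=
    ⟨‖x‖⁻¹ • x, norm_smul_inv_norm (norm_pos_iff.1 hx_pos), smul_inv_smul₀ hx_pos.ne' x⟩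
  have hray (t : ℝ) (ht : 1 ≤ t) : 1 ≤ ‖t • y‖ := by
    rwa [norm_smul, hy, mul_one, norm_of_nonneg (zero_le_one.trans ht)]
  have hupper : u x + C ≤ ‖x‖ ^ p * (u y + C) := by
    have h := map_smul_le_rpow_mul_of_fderiv_apply_self_le (v := fun z ↦ u z + C) (p := p)
      (fun t ht ↦ (hu _ (hray t ht)).add_const C)
      (fun t ht ↦ by
        rw [fderiv_add_const]
        linarith [(abs_le.1 (hC _ (hray t ht))).2]) hx
    rwa [hxy] at h
  have hlower : -u x + C ≤ ‖x‖ ^ p * (-u y + C) := by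
    have h := map_smul_le_rpow_mul_of_fderiv_apply_self_le (v := fun z ↦ -u z + C) (p := p)
      (fun t ht ↦ (hu _ (hray t ht)).neg.add_const C)
      (fun t ht ↦ by
        rw [fderiv_add_const, fderiv_fun_neg, _root_.neg_apply]
        linarith [(abs_le.1 (hC _ (hray t ht))).1]) hx
    rwa [hxy] at h
  calc |u x| + C = max (u x + C) (-u x + C) := (max_add_add_right _ _ _).symm
    _ ≤ ‖x‖ ^ p * (|u y| + C) := max_le
        (hupper.trans <| by gcongr; exact le_abs_self _)
        (hlower.trans <| by gcongr; exact neg_le_abs _)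
    _ ≤ (M + C) * ‖x‖ ^ p := by rw [mul_comm]; gcongr; exact hM y hy

end RadialGrowth

theorem abs_le_iSup_abs_of_continuousOn {X : Type*} [TopologicalSpace X] {K : Set X} {f : X → ℝ}
    (hK : IsCompact K) (hf : ContinuousOn f K) {x : X} (hx : x ∈ K) :
    |f x| ≤ ⨆ y : K, |f y| := by
  have hbdd : BddAbove (Set.range fun y : K ↦ |f y|) := by
    rw [← Set.image_eq_range (fun y ↦ |f y|) K]
    exact hK.bddAbove_image hf.abs
  exact le_ciSup hbdd ⟨x, hx⟩

theorem abs_sum_arctan_le {ι : Type*} (s : Finset ι) (θ : ι → ℝ) :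
    |∑ i ∈ s, arctan (θ i)| ≤ s.card * (π / 2) := by
  have harctan (t : ℝ) : |arctan t| ≤ π / 2 :=
    abs_le.2 ⟨(neg_pi_div_two_lt_arctan t).le, (arctan_lt_pi_div_two t).le⟩
  calc |∑ i ∈ s, arctan (θ i)| ≤ ∑ i ∈ s, |arctan (θ i)| := s.abs_sum_le_sum_abs _
    _ ≤ s.card • (π / 2) := s.sum_le_card_nsmul _ _ fun i _ ↦ harctan (θ i)
    _ = s.card * (π / 2) := nsmul_eq_mul _ _

theorem quadratic_growth_arctan_case_general {E ι : Type*} [NormedAddCommGroup E]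
    [NormedSpace ℝ E] [ProperSpace E] [Fintype ι] {u : E → ℝ} {c : ℝ} {θ : E → ι → ℝ}
    (hu : ∀ x, 1 ≤ ‖x‖ → DifferentiableAt ℝ u x)
    (heq : ∀ x, 1 ≤ ‖x‖ → c * ∑ i, arctan (θ x i) = -u x + (1 / 2) * fderiv ℝ u x x)
    {x : E} (hx : 1 ≤ ‖x‖) :
    |u x| ≤ ((⨆ y : Metric.sphere (0 : E) 1, |u y|) + Fintype.card ι * π * |c| / 2) *
      ‖x‖ ^ 2 := by
  have hbound (z : E) (hz : 1 ≤ ‖z‖) :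
      |fderiv ℝ u z z - 2 * u z| ≤ 2 * (Fintype.card ι * π * |c| / 2) :=
    calc |fderiv ℝ u z z - 2 * u z| = |2 * (c * ∑ i, arctan (θ z i))| := by
          rw [heq z hz]
          ring_nf
      _ = 2 * (|c| * |∑ i, arctan (θ z i)|) := by rw [abs_mul, abs_two, abs_mul]
      _ ≤ 2 * (|c| * (Fintype.card ι * (π / 2))) := by
          gcongr
          exact abs_sum_arctan_le Finset.univ (θ z)
      _ = 2 * (Fintype.card ι * π * |c| / 2) := by ring
  have hsphere (y : E) (hy : ‖y‖ = 1) : |u y| ≤ ⨆ z : Metric.sphere (0 : E) 1, |u z| := by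
    refine abs_le_iSup_abs_of_continuousOn (isCompact_sphere 0 1) (fun z hz ↦ ?_)
      (mem_sphere_zero_iff_norm.2 hy)
    exact (hu z (mem_sphere_zero_iff_norm.1 hz).ge).continuousAt.continuousWithinAt
  have hgrowth :=
    abs_add_le_mul_norm_rpow_of_abs_fderiv_apply_self_sub_le hu hbound hsphere hx
  rw [rpow_two] at hgrowth
  exact (le_add_of_nonneg_right (by positivity)).trans hgrowth

theorem quadratic_growth_arctan_case (n : ℕ) (hn : 1 ≤ n) (a b : ℝ)
    (ha0 : 0 < a) (ha1 : a < 1) (hb : b = Real.sqrt (1 - a ^ 2))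
    (u : EuclideanSpace ℝ (Fin n) → ℝ)
    (hu : ContDiff ℝ 2 u)
    (hadm : ∀ x, (Hess n u x + (a + b) • (1 : Matrix (Fin n) (Fin n) ℝ)).PosDef)
    (heq : ∀ x, (Real.sqrt (a ^ 2 + 1) / b) *
        ∑ i, Real.arctan ((eigs (Hess n u x) i + a - b) / (eigs (Hess n u x) i + a + b))
      = -u x + (1/2) * ⟪x, gradient u x⟫) :
    ∀ x : EuclideanSpace ℝ (Fin n), 1 ≤ ‖x‖ →
      |u x| ≤ ((⨆ y : Metric.sphere (0 : EuclideanSpace ℝ (Fin n)) 1, |u ↑y|)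
        + n * π * Real.sqrt (a ^ 2 + 1) / (2 * b)) * ‖x‖ ^ 2 := by
  intro x hx
  have hscale : |√(a ^ 2 + 1) / b| = √(a ^ 2 + 1) / b :=
    abs_of_nonneg (hb ▸ by positivity)
  have hdiff : Differentiable ℝ u := hu.differentiable two_ne_zero
  convert quadratic_growth_arctan_case_general (fun z _ ↦ hdiff z)
    (fun z _ ↦ (heq z).trans (by rw [inner_gradient_right, conj_trivial])) hx using 3
  rw [hscale, Fintype.card_fin]
  ring
end
end
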